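/- Let q ∈ k* and let F ∈ GL(n,k) with n ≥ 2, and assume that q² + tr(F·ᵀF⁻¹)·q + 1 = 0. Then the 2n images of the generators z_{ij} (1 ≤ i ≤ 2, 1 ≤ j ≤ n) in B(E_q, F) are linearly independent over k. -/

import Mathlib

open scoped TensorProduct
open Matrix

noncomputable section

variable (k : Type) [Field k]

/-- The matrix of free generators of the free algebra on `Fin m × Fin n`. -/
def gens (m n : ℕ) : Matrix (Fin m) (Fin n) (FreeAlgebra k (Fin m × Fin n)) :=
  Matrix.of fun i j => FreeAlgebra.ι k (i, j)

/-- A scalar matrix viewed as a matrix over a `k`-algebra. -/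
def liftMat {A : Type} [Semiring A] [Algebra k A] {p q : ℕ}
    (M : Matrix (Fin p) (Fin q) k) : Matrix (Fin p) (Fin q) A :=
  M.map (algebraMap k A)

/-- The defining relations of the algebra `B(E,F)`:
`F⁻¹ * ᵀz * E * z = 1` and `z * F⁻¹ * ᵀz * E = 1`. -/
inductive BRel {m n : ℕ} (E : Matrix (Fin m) (Fin m) k) (F : Matrix (Fin n) (Fin n) k) :
    FreeAlgebra k (Fin m × Fin n) → FreeAlgebra k (Fin m × Fin n) → Prop
  | left (i j : Fin n) : BRel E F
      ((liftMat k (A := FreeAlgebra k (Fin m × Fin n)) F⁻¹ * (gens k m n)ᵀ *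
          liftMat k (A := FreeAlgebra k (Fin m × Fin n)) E * gens k m n :
          Matrix (Fin n) (Fin n) (FreeAlgebra k (Fin m × Fin n))) i j)
      ((1 : Matrix (Fin n) (Fin n) (FreeAlgebra k (Fin m × Fin n))) i j)
  | right (i j : Fin m) : BRel E F
      ((gens k m n * liftMat k (A := FreeAlgebra k (Fin m × Fin n)) F⁻¹ * (gens k m n)ᵀ *
          liftMat k (A := FreeAlgebra k (Fin m × Fin n)) E :
          Matrix (Fin m) (Fin m) (FreeAlgebra k (Fin m × Fin n))) i j)
      ((1 : Matrix (Fin m) (Fin m) (FreeAlgebra k (Fin m × Fin n))) i j)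

/-- The algebra `B(E,F)`.  The Hopf algebra `B(E)` is `BB k E E`. -/
abbrev BB {m n : ℕ} (E : Matrix (Fin m) (Fin m) k) (F : Matrix (Fin n) (Fin n) k) :=
  RingQuot (BRel k E F)

/-- The matrix of generators of `B(E,F)`. -/
def ZMat {m n : ℕ} (E : Matrix (Fin m) (Fin m) k) (F : Matrix (Fin n) (Fin n) k) :
    Matrix (Fin m) (Fin n) (BB k E F) :=
  Matrix.of fun i j => RingQuot.mkAlgHom k (BRel k E F) (gens k m n i j)
/-- The matrix `E_q` with rows `(0, 1)` and `(−q⁻¹, 0)`, so that `B(E_q) = O(SL_q(2))`. -/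
def Eqm (q : k) : Matrix (Fin 2) (Fin 2) k := !![0, 1; -q⁻¹, 0]

/-!
Points of `B(H,E)` and `B(E,F)` with commuting entries multiply to points of `B(H,F)`. Multiplying
the generic point of `B(E,F)` by a point `g` of `B(E,E)` with linearly independent entries turns a
relation `∑ c_{ij} z_{ij} = 0` into `z ᵀc = 0`, and `z` has a left inverse, so `c = 0` as soon as
`B(E,F) ≠ 0`. For `E = E_q` such a `g` exists among triangular `3 × 3` matrices.

That `B(E_q,F) ≠ 0` may be checked over the algebraic closure, where `F⁻¹` has an isotropic vector
`β`. On the free algebra on `x_1, …, x_n`, multiplication by `x_j` together with operators `b_j`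
normalised by `b_j 1 = β_j` satisfies `ᵀz E_q z = F` exactly. The defect `D = z F⁻¹ ᵀz E_q - 1` then
satisfies `D z = 0` and `ᵀz E_q D = 0`; with the trace condition and the isotropy of `β` these make
the left ideal generated by the values of its first row stable under `z` and large enough to contain
all values of `D`, so both relations hold on the quotient. The ideal is proper because it
annihilates the constant sequence under a suitable weighted shift representation.
-/

section

variable {k}

section LiftMat

variable {A A' : Type} [Ring A] [Algebra k A] [Ring A'] [Algebra k A'] {m n p : ℕ}

theorem liftMat_mul (M : Matrix (Fin m) (Fin n) k) (N : Matrix (Fin n) (Fin p) k) :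
    liftMat k (A := A) (M * N) = liftMat k (A := A) M * liftMat k (A := A) N :=
  Matrix.map_mul (f := algebraMap k A)

theorem liftMat_one : liftMat k (A := A) (1 : Matrix (Fin n) (Fin n) k) = 1 :=
  Matrix.map_one _ (map_zero _) (map_one _)

theorem liftMat_injective [Nontrivial A] :
    Function.Injective (liftMat k (A := A) : Matrix (Fin m) (Fin n) k → _) :=
  Matrix.map_injective (FaithfulSMul.algebraMap_injective k A)

theorem liftMat_map_algHom (f : A →ₐ[k] A') (M : Matrix (Fin m) (Fin n) k) :
    (liftMat k (A := A) M).map f = liftMat k (A := A') M := by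
  ext i j
  exact f.commutes (M i j)

theorem liftMat_nonsing_inv_mul {F : Matrix (Fin n) (Fin n) k} (hF : IsUnit F.det) :
    liftMat k (A := A) F⁻¹ * liftMat k (A := A) F = 1 := by
  rw [← liftMat_mul, Matrix.nonsing_inv_mul _ hF, liftMat_one]

theorem liftMat_mul_nonsing_inv {F : Matrix (Fin n) (Fin n) k} (hF : IsUnit F.det) :
    liftMat k (A := A) F * liftMat k (A := A) F⁻¹ = 1 := by
  rw [← liftMat_mul, Matrix.mul_nonsing_inv _ hF, liftMat_one]

theorem mul_liftMat_mul_apply {l : ℕ} (y : Matrix (Fin m) (Fin n) A) (M : Matrix (Fin n) (Fin p) k)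
    (z : Matrix (Fin p) (Fin l) A) (i : Fin m) (j : Fin l) :
    (y * liftMat k (A := A) M * z) i j = ∑ r, ∑ s, M r s • (y i r * z s j) := by
  simp only [Matrix.mul_apply, Finset.sum_mul]
  rw [Finset.sum_comm]
  refine Finset.sum_congr rfl fun r _ => Finset.sum_congr rfl fun s _ => ?_
  rw [liftMat, Matrix.map_apply, ← Algebra.commutes, mul_assoc, ← Algebra.smul_def]

end LiftMat

theorem transpose_mul_of_commute {A : Type*} [NonUnitalNonAssocSemiring A] {l m n : Type*}
    [Fintype m] {x : Matrix l m A} {y : Matrix m n A}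
    (hxy : ∀ i j r s, Commute (x i j) (y r s)) : (x * y)ᵀ = yᵀ * xᵀ := by
  ext i j
  simp only [Matrix.transpose_apply, Matrix.mul_apply]
  exact Finset.sum_congr rfl fun r _ => hxy j r r i

theorem map_nonsing_inv_of_isUnit_det {R S ι : Type*} [CommRing R] [CommRing S] [Fintype ι]
    [DecidableEq ι] (f : R →+* S) {M : Matrix ι ι R} (hM : IsUnit M.det) :
    (M.map f)⁻¹ = M⁻¹.map f := by
  refine Matrix.inv_eq_left_inv ?_
  rw [← Matrix.map_mul, Matrix.nonsing_inv_mul _ hM, Matrix.map_one _ (map_zero f) (map_one f)]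

/-- `z` is an `A`-valued point of `B(E,F)`: a matrix over the `k`-algebra `A` which satisfies
the defining relations of `B(E,F)`. -/
structure IsBBPoint {A : Type} [Ring A] [Algebra k A] {m n : ℕ} (E : Matrix (Fin m) (Fin m) k)
    (F : Matrix (Fin n) (Fin n) k) (z : Matrix (Fin m) (Fin n) A) : Prop where
  left : liftMat k (A := A) F⁻¹ * zᵀ * liftMat k (A := A) E * z = 1
  right : z * liftMat k (A := A) F⁻¹ * zᵀ * liftMat k (A := A) E = 1

section Points

variable {A A' : Type} [Ring A] [Algebra k A] [Ring A'] [Algebra k A'] {m n p : ℕ}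
  {E : Matrix (Fin m) (Fin m) k} {F : Matrix (Fin n) (Fin n) k} {H : Matrix (Fin p) (Fin p) k}

theorem map_left_relation (f : A →ₐ[k] A') (z : Matrix (Fin m) (Fin n) A) :
    (liftMat k (A := A) F⁻¹ * zᵀ * liftMat k (A := A) E * z).map f =
      liftMat k (A := A') F⁻¹ * (z.map f)ᵀ * liftMat k (A := A') E * z.map f := by
  simp only [Matrix.map_mul, liftMat_map_algHom, Matrix.transpose_map]

theorem map_right_relation (f : A →ₐ[k] A') (z : Matrix (Fin m) (Fin n) A) :
    (z * liftMat k (A := A) F⁻¹ * zᵀ * liftMat k (A := A) E).map f =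
      z.map f * liftMat k (A := A') F⁻¹ * (z.map f)ᵀ * liftMat k (A := A') E := by
  simp only [Matrix.map_mul, liftMat_map_algHom, Matrix.transpose_map]

theorem isBBPoint_ZMat : IsBBPoint E F (ZMat k E F) where
  left := by
    refine (map_left_relation (RingQuot.mkAlgHom k (BRel k E F)) (gens k m n)).symm.trans ?_
    rw [← Matrix.map_one _ (map_zero (RingQuot.mkAlgHom k (BRel k E F))) (map_one _)]
    ext i j
    exact RingQuot.mkAlgHom_rel k (BRel.left i j)
  right := by
    refine (map_right_relation (RingQuot.mkAlgHom k (BRel k E F)) (gens k m n)).symm.trans ?_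
    rw [← Matrix.map_one _ (map_zero (RingQuot.mkAlgHom k (BRel k E F))) (map_one _)]
    ext i j
    exact RingQuot.mkAlgHom_rel k (BRel.right i j)

namespace IsBBPoint

variable {z : Matrix (Fin m) (Fin n) A}

theorem map (hz : IsBBPoint E F z) (f : A →ₐ[k] A') : IsBBPoint E F (z.map f) where
  left := by rw [← map_left_relation, hz.left, Matrix.map_one _ (map_zero f) (map_one f)]
  right := by rw [← map_right_relation, hz.right, Matrix.map_one _ (map_zero f) (map_one f)]

theorem transpose_mul_mul (hF : IsUnit F.det) (hz : IsBBPoint E F z) :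
    zᵀ * liftMat k (A := A) E * z = liftMat k (A := A) F := by
  calc
    zᵀ * liftMat k (A := A) E * z
        = liftMat k (A := A) F * (liftMat k (A := A) F⁻¹ * zᵀ * liftMat k (A := A) E * z) := by
      simp only [← Matrix.mul_assoc, liftMat_mul_nonsing_inv hF, Matrix.one_mul]
    _ = liftMat k (A := A) F := by rw [hz.left, Matrix.mul_one]

theorem mul_mul_transpose (hE : IsUnit E.det) (hz : IsBBPoint E F z) :
    z * liftMat k (A := A) F⁻¹ * zᵀ = liftMat k (A := A) E⁻¹ := by
  rw [← Matrix.mul_one (z * _ * _), ← liftMat_mul_nonsing_inv hE, ← Matrix.mul_assoc, hz.right,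
    Matrix.one_mul]

theorem of_transpose_mul_mul (hF : IsUnit F.det)
    (h : zᵀ * liftMat k (A := A) E * z = liftMat k (A := A) F)
    (h' : z * liftMat k (A := A) F⁻¹ * zᵀ * liftMat k (A := A) E = 1) : IsBBPoint E F z where
  left := by
    simp only [Matrix.mul_assoc] at h ⊢
    rw [h, liftMat_nonsing_inv_mul hF]
  right := h'

/-- The algebra map `B(E,F) → A` classified by an `A`-valued point of `B(E,F)`. -/
def lift (hz : IsBBPoint E F z) : BB k E F →ₐ[k] A :=
  RingQuot.liftAlgHom k ⟨FreeAlgebra.lift k fun p => z p.1 p.2, by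
    let f : FreeAlgebra k (Fin m × Fin n) →ₐ[k] A := FreeAlgebra.lift k fun p => z p.1 p.2
    have hgens : (gens k m n).map f = z := by
      ext i j
      simp [gens, f]
    have hleft := map_left_relation (E := E) (F := F) f (gens k m n)
    have hright := map_right_relation (E := E) (F := F) f (gens k m n)
    rw [hgens, hz.left, ← Matrix.map_one f (map_zero f) (map_one f)] at hleft
    rw [hgens, hz.right, ← Matrix.map_one f (map_zero f) (map_one f)] at hright
    rintro - - (⟨i, j⟩ | ⟨i, j⟩)
    · exact congr_fun₂ hleft i j
    · exact congr_fun₂ hright i j⟩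

theorem lift_ZMat (hz : IsBBPoint E F z) (i : Fin m) (j : Fin n) :
    hz.lift (ZMat k E F i j) = z i j := by
  simp [lift, ZMat, gens]

theorem nontrivial_BB [Nontrivial A] (hz : IsBBPoint E F z) : Nontrivial (BB k E F) :=
  hz.lift.toRingHom.domain_nontrivial

theorem mul {g : Matrix (Fin p) (Fin m) A} (hE : IsUnit E.det) (hg : IsBBPoint H E g)
    (hz : IsBBPoint E F z) (hgz : ∀ i j r s, Commute (g i j) (z r s)) :
    IsBBPoint H F (g * z) where
  left := by
    have hgE := hg.transpose_mul_mul hE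
    have hzF := hz.left
    rw [transpose_mul_of_commute hgz]
    simp only [Matrix.mul_assoc] at hgE hzF ⊢
    rw [← Matrix.mul_assoc (liftMat k H), ← Matrix.mul_assoc gᵀ, hgE, hzF]
  right := by
    have hgE := hg.right
    have hzF := hz.mul_mul_transpose hE
    rw [transpose_mul_of_commute hgz, ← Matrix.mul_assoc, Matrix.mul_assoc g,
      Matrix.mul_assoc g, hzF, hgE]

theorem tensor {C : Type} [Ring C] [Algebra k C] {g : Matrix (Fin p) (Fin m) C}
    (hE : IsUnit E.det) (hg : IsBBPoint H E g) (hz : IsBBPoint E F z) :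
    IsBBPoint H F (Matrix.of fun i j => ∑ l, g i l ⊗ₜ[k] z l j : Matrix _ _ (C ⊗[k] A)) := by
  let inl : C →ₐ[k] C ⊗[k] A := Algebra.TensorProduct.includeLeft
  let inr : A →ₐ[k] C ⊗[k] A := Algebra.TensorProduct.includeRight
  have hmul : g.map inl * z.map inr = Matrix.of fun i j => ∑ l, g i l ⊗ₜ[k] z l j := by
    ext i j
    simp [Matrix.mul_apply, inl, inr]
  exact hmul ▸ (hg.map inl).mul hE (hz.map inr) fun _ _ _ _ => by
    simp [inl, inr, Commute, SemiconjBy]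

end IsBBPoint

end Points

section BaseChange

variable {K A : Type} [Field K] [Algebra k K] [Ring A] [Algebra K A] [Algebra k A]
  [IsScalarTower k K A] {m n : ℕ}

theorem liftMat_map_algebraMap (M : Matrix (Fin m) (Fin n) k) :
    liftMat K (A := A) (M.map (algebraMap k K)) = liftMat k (A := A) M := by
  ext i j
  exact (IsScalarTower.algebraMap_apply k K A (M i j)).symm

theorem IsBBPoint.restrictScalars {E : Matrix (Fin m) (Fin m) k} {F : Matrix (Fin n) (Fin n) k}
    (hF : IsUnit F.det) {z : Matrix (Fin m) (Fin n) A}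
    (hz : IsBBPoint (E.map (algebraMap k K)) (F.map (algebraMap k K)) z) : IsBBPoint E F z where
  left := by
    simpa only [map_nonsing_inv_of_isUnit_det _ hF, liftMat_map_algebraMap] using hz.left
  right := by
    simpa only [map_nonsing_inv_of_isUnit_det _ hF, liftMat_map_algebraMap] using hz.right

end BaseChange

section Coaction

theorem eq_zero_of_sum_tmul_eq_zero {ι V W : Type*} [Fintype ι] [AddCommGroup V] [Module k V]
    [AddCommGroup W] [Module k W] {v : ι → V} (hv : LinearIndependent k v) {w : ι → W}
    (h : ∑ i, v i ⊗ₜ[k] w i = 0) (i : ι) : w i = 0 := by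
  classical
  obtain ⟨coord, hcoord⟩ := LinearMap.exists_leftInverse_of_injective
    (Fintype.linearCombination k v) (LinearMap.ker_eq_bot.2 hv.fintypeLinearCombination_injective)
  have hcoord_apply (j : ι) : coord (v j) = Pi.single j 1 := by
    simpa using LinearMap.congr_fun hcoord (Pi.single j 1)
  simpa [hcoord_apply, Pi.single_apply] using
    congrArg (TensorProduct.lid k W ∘ (LinearMap.proj i ∘ₗ coord).rTensor W) h

theorem linearIndependent_ZMat_of_isBBPoint {C : Type} [Ring C] [Algebra k C] {m n : ℕ}
    {E : Matrix (Fin m) (Fin m) k} {F : Matrix (Fin n) (Fin n) k} [Nontrivial (BB k E F)]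
    (hE : IsUnit E.det) {g : Matrix (Fin m) (Fin m) C} (hg : IsBBPoint E E g)
    (hg_indep : LinearIndependent k fun p : Fin m × Fin m => g p.1 p.2) :
    LinearIndependent k fun p : Fin m × Fin n => ZMat k E F p.1 p.2 := by
  rw [Fintype.linearIndependent_iff]
  intro c hc
  let γ : Matrix (Fin m) (Fin n) (C ⊗[k] BB k E F) :=
    Matrix.of fun i j => ∑ l, g i l ⊗ₜ[k] ZMat k E F l j
  let cMat : Matrix (Fin m) (Fin n) k := Matrix.of fun i j => c (i, j)
  have hγ : IsBBPoint E F γ := hg.tensor hE isBBPoint_ZMat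
  have hcoaction : ∑ p : Fin m × Fin m,
      g p.1 p.2 ⊗ₜ[k] (ZMat k E F * liftMat k (A := BB k E F) cMatᵀ) p.2 p.1 = 0 := by
    have h := congrArg hγ.lift hc
    simp only [map_sum, map_smul, hγ.lift_ZMat, map_zero, γ, Matrix.of_apply] at h
    rw [← h, Fintype.sum_prod_type, Fintype.sum_prod_type]
    refine Finset.sum_congr rfl fun i _ => ?_
    simp only [Matrix.mul_apply, TensorProduct.tmul_sum]
    rw [Finset.sum_comm]
    simp [Finset.smul_sum, liftMat, cMat, ← Algebra.commutes, ← Algebra.smul_def]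
  have hmul : ZMat k E F * liftMat k (A := BB k E F) cMatᵀ = 0 := by
    ext l i
    exact eq_zero_of_sum_tmul_eq_zero hg_indep hcoaction (i, l)
  have hzero : liftMat k (A := BB k E F) cMatᵀ = 0 := by
    rw [← Matrix.one_mul (liftMat k cMatᵀ), ← isBBPoint_ZMat.left, Matrix.mul_assoc, hmul,
      Matrix.mul_zero]
  rintro ⟨i, j⟩
  exact congr_fun₂ (liftMat_injective (hzero.trans (Matrix.map_zero _ (map_zero _)).symm)) j i

end Coaction

section QuantumSL2

open scoped LaurentPolynomial

variable {q : k}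

theorem isUnit_det_Eqm (hq : q ≠ 0) : IsUnit (Eqm k q).det := by
  simp [Eqm, Matrix.det_fin_two, hq]

theorem Eqm_inv (hq : q ≠ 0) : (Eqm k q)⁻¹ = !![0, -q; 1, 0] := by
  refine Matrix.inv_eq_left_inv ?_
  simp [Eqm, Matrix.one_fin_two, hq]

theorem isBBPoint_Eqm_of_relations {A : Type} [Ring A] [Algebra k A] {a b c d : A} (hq : q ≠ 0)
    (hba : b * a = q • (a * b)) (hca : c * a = q • (a * c)) (hdb : d * b = q • (b * d))
    (hdc : d * c = q • (c * d)) (hcb : c * b = b * c) (had : a * d = 1 + q⁻¹ • (b * c))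
    (hda : d * a = 1 + q • (b * c)) : IsBBPoint (Eqm k q) (Eqm k q) !![a, b; c, d] := by
  have hinv : !![a, b; c, d] * liftMat k (A := A) (Eqm k q)⁻¹ * !![a, b; c, d]ᵀ =
      liftMat k (A := A) (Eqm k q)⁻¹ := by
    ext i j
    rw [mul_liftMat_mul_apply, Eqm_inv hq]
    fin_cases i <;> fin_cases j <;>
      simp [liftMat, hba, hcb, hdc, had, hda, hq, smul_smul, Algebra.algebraMap_eq_smul_one]
  refine .of_transpose_mul_mul (isUnit_det_Eqm hq) ?_
    (by rw [hinv, liftMat_nonsing_inv_mul (isUnit_det_Eqm hq)])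
  ext i j
  rw [mul_liftMat_mul_apply]
  fin_cases i <;> fin_cases j <;>
    simp [Eqm, liftMat, hca, hcb, hdb, had, hda, hq, smul_smul, Algebra.algebraMap_eq_smul_one]

theorem diagonal_mul_single {R ι : Type*} [Semiring R] [Fintype ι] [DecidableEq ι] (v : ι → R)
    (i j : ι) (r : R) : Matrix.diagonal v * Matrix.single i j r = Matrix.single i j (v i * r) := by
  ext s t
  simp +contextual [Matrix.diagonal_mul, Matrix.single_apply]

theorem single_mul_diagonal {R ι : Type*} [Semiring R] [Fintype ι] [DecidableEq ι] (v : ι → R)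
    (i j : ι) (r : R) : Matrix.single i j r * Matrix.diagonal v = Matrix.single i j (r * v j) := by
  ext s t
  simp +contextual [Matrix.mul_diagonal, Matrix.single_apply]

/-- An `SL_q(2)`-point over triangular matrices with linearly independent entries: the off-diagonal
entries multiply to `0`, and the variable `T` separates the two mutually inverse diagonal ones. -/
def slqPoint (q : k) : Matrix (Fin 2) (Fin 2) (Matrix (Fin 3) (Fin 3) k[T;T⁻¹]) :=
  !![.diagonal ![.T 1, q • .T 1, q • .T 1], .single 0 1 1;
    .single 0 2 1, .diagonal ![.T (-1), q⁻¹ • .T (-1), q⁻¹ • .T (-1)]]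

theorem isBBPoint_slqPoint (hq : q ≠ 0) : IsBBPoint (Eqm k q) (Eqm k q) (slqPoint q) := by
  have hTT : (.T 1 : k[T;T⁻¹]) * .T (-1) = 1 := by
    rw [← LaurentPolynomial.T_add, add_neg_cancel, LaurentPolynomial.T_zero]
  have hdiag : Matrix.diagonal ![(.T 1 : k[T;T⁻¹]), q • .T 1, q • .T 1] *
      Matrix.diagonal ![.T (-1), q⁻¹ • .T (-1), q⁻¹ • .T (-1)] = 1 := by
    rw [Matrix.diagonal_mul_diagonal, ← Matrix.diagonal_one]
    congr! 2 with i
    fin_cases i <;> simp [hTT, smul_smul, hq]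
  have hprod : (Matrix.single 0 1 1 * Matrix.single 0 2 1 : Matrix (Fin 3) (Fin 3) k[T;T⁻¹]) = 0 :=
    Matrix.single_mul_single_of_ne _ _ _ _ (by decide) _
  rw [slqPoint]
  apply isBBPoint_Eqm_of_relations hq
  case had => rw [hdiag, hprod, smul_zero, add_zero]
  case hda => rw [mul_eq_one_comm.1 hdiag, hprod, smul_zero, add_zero]
  case hcb => rw [hprod, Matrix.single_mul_single_of_ne _ _ _ _ (by decide)]
  all_goals
    simp only [diagonal_mul_single, single_mul_diagonal, Matrix.smul_single]
    simp [smul_smul, hq]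

theorem linearIndependent_slqPoint :
    LinearIndependent k fun p : Fin 2 × Fin 2 => slqPoint q p.1 p.2 := by
  rw [Fintype.linearIndependent_iff]
  intro c hc
  have hentry (j : Fin 3) := congrFun₂ hc 0 j
  have h01 : c (0, 1) = 0 := by simpa [Fintype.sum_prod_type, slqPoint] using hentry 1
  have h10 : c (1, 0) = 0 := by simpa [Fintype.sum_prod_type, slqPoint] using hentry 2
  have hdiag : c (0, 0) • (.T 1 : k[T;T⁻¹]) + c (1, 1) • .T (-1) = 0 := by
    simpa [Fintype.sum_prod_type, slqPoint] using hentry 0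
  have hcoeff (d : ℤ) := congrArg (fun f : k[T;T⁻¹] => f.coeff d) hdiag
  have h00 : c (0, 0) = 0 := by simpa using hcoeff 1
  have h11 : c (1, 1) = 0 := by simpa using hcoeff (-1)
  rintro ⟨i, j⟩
  fin_cases i <;> fin_cases j <;> assumption

end QuantumSL2

section Defect

variable {A : Type} [Ring A] [Algebra k A] {m n : ℕ} {E : Matrix (Fin m) (Fin m) k}
  {F : Matrix (Fin n) (Fin n) k} {z : Matrix (Fin m) (Fin n) A}

/-- The failure of the second defining relation of `B(E,F)` for a matrix `z`. -/
def defect (E : Matrix (Fin m) (Fin m) k) (F : Matrix (Fin n) (Fin n) k)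
    (z : Matrix (Fin m) (Fin n) A) : Matrix (Fin m) (Fin m) A :=
  z * liftMat k (A := A) F⁻¹ * zᵀ * liftMat k (A := A) E - 1

theorem defect_mul (hF : IsUnit F.det) (hz : zᵀ * liftMat k (A := A) E * z = liftMat k (A := A) F) :
    defect E F z * z = 0 := by
  rw [Matrix.mul_assoc] at hz
  rw [defect, Matrix.sub_mul, Matrix.mul_assoc, Matrix.mul_assoc (z * _), hz, Matrix.mul_assoc,
    liftMat_nonsing_inv_mul hF, Matrix.mul_one, Matrix.one_mul, sub_self]

theorem transpose_mul_mul_defect (hF : IsUnit F.det)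
    (hz : zᵀ * liftMat k (A := A) E * z = liftMat k (A := A) F) :
    zᵀ * liftMat k (A := A) E * defect E F z = 0 := by
  simp only [defect, Matrix.mul_sub, ← Matrix.mul_assoc, hz, liftMat_mul_nonsing_inv hF,
    Matrix.one_mul, Matrix.mul_one, sub_self]

end Defect

section DefectEqm

variable {A : Type} [Ring A] [Algebra k A] {n : ℕ} {q : k} {F : Matrix (Fin n) (Fin n) k}
  {z : Matrix (Fin 2) (Fin n) A}

theorem transpose_mul_Eqm_mul_apply {l : ℕ} (x : Matrix (Fin 2) (Fin l) A) (i : Fin n)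
    (j : Fin l) : (zᵀ * liftMat k (A := A) (Eqm k q) * x) i j =
      z 0 i * x 1 j - q⁻¹ • (z 1 i * x 0 j) := by
  rw [mul_liftMat_mul_apply]
  simp [Eqm, sub_eq_add_neg]

theorem defect_Eqm_apply_zero (i : Fin 2) : defect (Eqm k q) F z i 0 =
    -q⁻¹ • (∑ r, ∑ s, F⁻¹ r s • (z i r * z 1 s)) - (1 : Matrix (Fin 2) (Fin 2) A) i 0 := by
  rw [defect, Matrix.sub_apply, Matrix.mul_apply, Fin.sum_univ_two, mul_liftMat_mul_apply,
    mul_liftMat_mul_apply]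
  simp [Eqm, liftMat, Algebra.smul_def, Algebra.commutes]

theorem defect_Eqm_apply_one (i : Fin 2) : defect (Eqm k q) F z i 1 =
    ∑ r, ∑ s, F⁻¹ r s • (z i r * z 0 s) - (1 : Matrix (Fin 2) (Fin 2) A) i 1 := by
  rw [defect, Matrix.sub_apply, Matrix.mul_apply, Fin.sum_univ_two, mul_liftMat_mul_apply,
    mul_liftMat_mul_apply]
  simp [Eqm, liftMat]

theorem mul_defect_Eqm (hq : q ≠ 0) (hF : IsUnit F.det)
    (hz : zᵀ * liftMat k (A := A) (Eqm k q) * z = liftMat k (A := A) F) (i : Fin n) (c : Fin 2) :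
    z 1 i * defect (Eqm k q) F z 0 c = q • (z 0 i * defect (Eqm k q) F z 1 c) := by
  have h := congrFun₂ (transpose_mul_mul_defect hF hz) i c
  rw [transpose_mul_Eqm_mul_apply, Matrix.zero_apply, sub_eq_zero] at h
  rw [h, smul_inv_smul₀ hq]

theorem defect_Eqm_mul (hF : IsUnit F.det)
    (hz : zᵀ * liftMat k (A := A) (Eqm k q) * z = liftMat k (A := A) F) (r : Fin 2) (j : Fin n) :
    defect (Eqm k q) F z r 0 * z 0 j = -(defect (Eqm k q) F z r 1 * z 1 j) := by
  have h := congrFun₂ (defect_mul hF hz) r j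
  rwa [Matrix.mul_apply, Fin.sum_univ_two, Matrix.zero_apply, add_eq_zero_iff_eq_neg] at h

theorem defect_Eqm_one_one (hq : q ≠ 0) (htr : q ^ 2 + (F * F⁻¹ᵀ).trace * q + 1 = 0)
    (hz : zᵀ * liftMat k (A := A) (Eqm k q) * z = liftMat k (A := A) F) :
    defect (Eqm k q) F z 1 1 = -q ^ 2 • defect (Eqm k q) F z 0 0 := by
  set S : A := ∑ r, ∑ s, F⁻¹ r s • (z 0 r * z 1 s) with hS
  have htrace : (F * F⁻¹ᵀ).trace = ∑ r, ∑ s, F⁻¹ r s * F r s := by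
    simp [Matrix.trace, Matrix.mul_apply, mul_comm]
  have hS' : ∑ r, ∑ s, F⁻¹ r s • (z 1 r * z 0 s) =
      q • S - algebraMap k A (q * (F * F⁻¹ᵀ).trace) := by
    have h (r s : Fin n) : z 1 r * z 0 s = q • (z 0 r * z 1 s) - algebraMap k A (q * F r s) := by
      have hrs := congrFun₂ hz r s
      rw [transpose_mul_Eqm_mul_apply, liftMat, Matrix.map_apply] at hrs
      rw [map_mul, ← Algebra.smul_def, ← hrs, smul_sub, smul_inv_smul₀ hq, sub_sub_cancel]
    simp only [h, htrace, hS, smul_sub, Finset.sum_sub_distrib, Finset.smul_sum, Finset.mul_sum,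
      map_sum, smul_comm q]
    congr! 5
    rw [Algebra.smul_def, ← map_mul, mul_left_comm]
  have htr' : q * (F * F⁻¹ᵀ).trace = - q ^ 2 - 1 := by linear_combination htr
  rw [defect_Eqm_apply_one, defect_Eqm_apply_zero, ← hS, hS', htr']
  simp only [Matrix.one_apply_eq, Algebra.algebraMap_eq_smul_one]
  match_scalars <;> field_simp
  ring

end DefectEqm

section Intertwining

variable {V W : Type} [AddCommGroup V] [Module k V] [AddCommGroup W] [Module k W] {m n p l : ℕ}
  {E : Matrix (Fin m) (Fin m) k} {F : Matrix (Fin n) (Fin n) k} {π : V →ₗ[k] W}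

theorem mul_liftMat_mul_apply_intertwining
    {y : Matrix (Fin m) (Fin n) (Module.End k V)} {y' : Matrix (Fin m) (Fin n) (Module.End k W)}
    {z : Matrix (Fin p) (Fin l) (Module.End k V)} {z' : Matrix (Fin p) (Fin l) (Module.End k W)}
    (hy : ∀ i j v, y' i j (π v) = π (y i j v)) (hz : ∀ i j v, z' i j (π v) = π (z i j v))
    (M : Matrix (Fin n) (Fin p) k) (i : Fin m) (j : Fin l) (v : V) :
    (y' * liftMat k (A := Module.End k W) M * z') i j (π v) =
      π ((y * liftMat k (A := Module.End k V) M * z) i j v) := by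
  simp [mul_liftMat_mul_apply, hy, hz]

theorem isBBPoint_of_surjective_intertwining (hF : IsUnit F.det)
    {z : Matrix (Fin m) (Fin n) (Module.End k V)} {w : Matrix (Fin m) (Fin n) (Module.End k W)}
    (hπ : Function.Surjective π) (hw : ∀ i j v, w i j (π v) = π (z i j v))
    (hz : zᵀ * liftMat k (A := Module.End k V) E * z = liftMat k (A := Module.End k V) F)
    (hdefect : ∀ i j v, π (defect E F z i j v) = 0) : IsBBPoint E F w := by
  have hw' (i : Fin n) (j : Fin m) (v : V) : wᵀ i j (π v) = π (zᵀ i j v) := hw j i v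
  have hone (i j : Fin m) (v : V) : (1 : Matrix (Fin m) (Fin m) (Module.End k W)) i j (π v) =
      π ((1 : Matrix (Fin m) (Fin m) (Module.End k V)) i j v) := by
    obtain rfl | hij := eq_or_ne i j <;> simp [*]
  refine .of_transpose_mul_mul hF ?_ (sub_eq_zero.1 ?_)
  · ext i j x
    obtain ⟨v, rfl⟩ := hπ x
    rw [mul_liftMat_mul_apply_intertwining hw' hw, hz]
    simp [liftMat, Module.algebraMap_end_apply]
  · ext i j x
    obtain ⟨v, rfl⟩ := hπ x
    have hprod := mul_liftMat_mul_apply_intertwining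
      (mul_liftMat_mul_apply_intertwining hw hw' F⁻¹) hone E i j v
    have hv := hdefect i j v
    rw [Matrix.mul_one, Matrix.mul_one] at hprod
    rw [defect, Matrix.sub_apply, LinearMap.sub_apply, map_sub, ← hprod, ← hone] at hv
    exact hv

end Intertwining

section Fock

variable {n : ℕ}

theorem mul_mem_of_forall_ι_mul_mem {X : Type*} {Q : Submodule k (FreeAlgebra k X)}
    (hQ : ∀ x, ∀ t ∈ Q, FreeAlgebra.ι k x * t ∈ Q) (a : FreeAlgebra k X) {t : FreeAlgebra k X}
    (ht : t ∈ Q) : a * t ∈ Q := by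
  induction a using FreeAlgebra.induction generalizing t with
  | grade0 r => exact Algebra.smul_def r t ▸ Q.smul_mem r ht
  | grade1 x => exact hQ x t ht
  | mul a b iha ihb => exact mul_assoc a b t ▸ iha (ihb ht)
  | add a b iha ihb => exact add_mul a b t ▸ Q.add_mem (iha ht) (ihb ht)

/-- The recursion defining the lowering operators, packaged as an operator on pairs: if `y i` is
the value of the `i`-th lowering operator at `t`, then the pair `(t, y)` is sent to `x_j t` and the
values of the lowering operators at `x_j t`. -/
def loweringStep (q : k) (F : Matrix (Fin n) (Fin n) k) (j : Fin n) :
    Module.End k (FreeAlgebra k (Fin n) × (Fin n → FreeAlgebra k (Fin n))) :=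
  (LinearMap.mulLeft k (FreeAlgebra.ι k j) ∘ₗ LinearMap.fst k _ _).prod <| LinearMap.pi fun i =>
    q • LinearMap.mulLeft k (FreeAlgebra.ι k i) ∘ₗ LinearMap.proj j ∘ₗ LinearMap.snd k _ _ -
      (q * F i j) • LinearMap.fst k _ _

theorem fst_lift_loweringStep (q : k) (F : Matrix (Fin n) (Fin n) k) (t : FreeAlgebra k (Fin n))
    (p : FreeAlgebra k (Fin n) × (Fin n → FreeAlgebra k (Fin n))) :
    (FreeAlgebra.lift k (loweringStep q F) t p).1 = t * p.1 := by
  induction t using FreeAlgebra.induction generalizing p with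
  | grade0 r => simp [Algebra.smul_def]
  | grade1 j => simp [loweringStep]
  | mul a b iha ihb => simp [iha, ihb, mul_assoc]
  | add a b iha ihb => simp [iha, ihb, add_mul]

/-- The lowering operators `b_i` on the free algebra: they send `1` to the scalar `β i` and satisfy
`b_i x_j = q x_i b_j - q F_{ij}`. -/
def lowering (q : k) (F : Matrix (Fin n) (Fin n) k) (β : Fin n → k) (i : Fin n) :
    Module.End k (FreeAlgebra k (Fin n)) :=
  LinearMap.proj i ∘ₗ LinearMap.snd k _ _ ∘ₗ
    LinearMap.applyₗ (1, fun i => algebraMap k (FreeAlgebra k (Fin n)) (β i)) ∘ₗ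
      (FreeAlgebra.lift k (loweringStep q F)).toLinearMap

variable {q : k} {F : Matrix (Fin n) (Fin n) k} {β : Fin n → k}

theorem lowering_one (i : Fin n) : lowering q F β i 1 = algebraMap k _ (β i) := by
  simp [lowering]

theorem lowering_ι_mul (i j : Fin n) (t : FreeAlgebra k (Fin n)) :
    lowering q F β i (FreeAlgebra.ι k j * t) =
      q • (FreeAlgebra.ι k i * lowering q F β j t) - (q * F i j) • t := by
  simp [lowering, loweringStep, fst_lift_loweringStep]

/-- The pair of rows formed by the multiplications `x_j` and the lowering operators `b_j`. -/
def fockMatrix (q : k) (F : Matrix (Fin n) (Fin n) k) (β : Fin n → k) :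
    Matrix (Fin 2) (Fin n) (Module.End k (FreeAlgebra k (Fin n))) :=
  Matrix.of ![fun j => LinearMap.mulLeft k (FreeAlgebra.ι k j), lowering q F β]

@[simp]
theorem fockMatrix_zero_apply (j : Fin n) (t : FreeAlgebra k (Fin n)) :
    fockMatrix q F β 0 j t = FreeAlgebra.ι k j * t := rfl

@[simp]
theorem fockMatrix_one (j : Fin n) : fockMatrix q F β 1 j = lowering q F β j := rfl

theorem fockMatrix_transpose_mul_mul (hq : q ≠ 0) :
    (fockMatrix q F β)ᵀ * liftMat k (A := Module.End k (FreeAlgebra k (Fin n))) (Eqm k q) *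
      fockMatrix q F β = liftMat k (A := Module.End k (FreeAlgebra k (Fin n))) F := by
  ext1 i j
  refine LinearMap.ext fun t => ?_
  rw [transpose_mul_Eqm_mul_apply]
  simp [lowering_ι_mul, smul_sub, smul_smul, hq, liftMat]

/-- The left ideal generated by the values of the top row of the defect of `fockMatrix`. -/
def fockIdeal (q : k) (F : Matrix (Fin n) (Fin n) k) (β : Fin n → k) :
    Submodule (FreeAlgebra k (Fin n)) (FreeAlgebra k (Fin n)) :=
  Submodule.span _ {t | ∃ c s, defect (Eqm k q) F (fockMatrix q F β) 0 c s = t}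

theorem defect_fockMatrix_zero_apply_mem (c : Fin 2) (t : FreeAlgebra k (Fin n)) :
    defect (Eqm k q) F (fockMatrix q F β) 0 c t ∈ fockIdeal q F β :=
  Submodule.subset_span ⟨c, t, rfl⟩

theorem smul_mem_fockIdeal (r : k) {t : FreeAlgebra k (Fin n)} (ht : t ∈ fockIdeal q F β) :
    r • t ∈ fockIdeal q F β :=
  Submodule.smul_of_tower_mem _ r ht

theorem dotProduct_mulVec_eq_sum {R l m : Type*} [CommSemiring R] [Fintype l] [Fintype m]
    (v : l → R) (M : Matrix l m R) (w : m → R) : v ⬝ᵥ M *ᵥ w = ∑ r, ∑ s, M r s * (v r * w s) := by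
  simp only [dotProduct, Matrix.mulVec, Finset.mul_sum, mul_left_comm]

theorem defect_fockMatrix_one_zero_one (hβ : β ⬝ᵥ F⁻¹ *ᵥ β = 0) :
    defect (Eqm k q) F (fockMatrix q F β) 1 0 1 = 0 := by
  have hsum : ∑ r, ∑ s, F⁻¹ r s * (β s * β r) = 0 := by
    simpa only [dotProduct_mulVec_eq_sum, mul_comm] using hβ
  rw [defect_Eqm_apply_zero]
  simp [LinearMap.sum_apply, lowering_one, Algebra.algebraMap_eq_smul_one, smul_smul,
    ← Finset.sum_smul, hsum]

theorem defect_fockMatrix_apply_mem (hq : q ≠ 0) (hF : IsUnit F.det)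
    (htr : q ^ 2 + (F * F⁻¹ᵀ).trace * q + 1 = 0) (hβ : β ⬝ᵥ F⁻¹ *ᵥ β = 0) (r c : Fin 2)
    (t : FreeAlgebra k (Fin n)) :
    defect (Eqm k q) F (fockMatrix q F β) r c t ∈ fockIdeal q F β := by
  have hz := fockMatrix_transpose_mul_mul (F := F) (β := β) hq
  have h11 (t : FreeAlgebra k (Fin n)) :
      defect (Eqm k q) F (fockMatrix q F β) 1 1 t ∈ fockIdeal q F β := by
    rw [defect_Eqm_one_one hq htr hz, LinearMap.smul_apply]
    exact smul_mem_fockIdeal _ (defect_fockMatrix_zero_apply_mem 0 t)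
  fin_cases r
  · exact defect_fockMatrix_zero_apply_mem c t
  fin_cases c
  · let Q : Submodule k (FreeAlgebra k (Fin n)) :=
      ((fockIdeal q F β).restrictScalars k).comap (defect (Eqm k q) F (fockMatrix q F β) 1 0)
    have hQ (j : Fin n) (t : FreeAlgebra k (Fin n)) : FreeAlgebra.ι k j * t ∈ Q := by
      have h : defect (Eqm k q) F (fockMatrix q F β) 1 0 (FreeAlgebra.ι k j * t) =
          -defect (Eqm k q) F (fockMatrix q F β) 1 1 (lowering q F β j t) :=
        LinearMap.congr_fun (defect_Eqm_mul hF hz 1 j) t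
      rw [Submodule.mem_comap, h]
      exact neg_mem (h11 _)
    have h1 : 1 ∈ Q := by
      simp [Q, defect_fockMatrix_one_zero_one hβ]
    simpa [Q] using mul_mem_of_forall_ι_mul_mem (fun j t _ => hQ j t) t h1
  · exact h11 t

theorem lowering_mem_fockIdeal (hq : q ≠ 0) (hF : IsUnit F.det)
    (htr : q ^ 2 + (F * F⁻¹ᵀ).trace * q + 1 = 0) (hβ : β ⬝ᵥ F⁻¹ *ᵥ β = 0)
    {t : FreeAlgebra k (Fin n)} (ht : t ∈ fockIdeal q F β) (i : Fin n) :
    lowering q F β i t ∈ fockIdeal q F β := by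
  let N : Submodule k (FreeAlgebra k (Fin n)) := (fockIdeal q F β).restrictScalars k
  let Q : Submodule k (FreeAlgebra k (Fin n)) := N ⊓ ⨅ i, N.comap (lowering q F β i)
  have hQ (j : Fin n) (t : FreeAlgebra k (Fin n)) (ht : t ∈ Q) : FreeAlgebra.ι k j * t ∈ Q := by
    simp only [Q, N, Submodule.mem_inf, Submodule.mem_iInf, Submodule.mem_comap,
      Submodule.restrictScalars_mem] at ht ⊢
    refine ⟨Submodule.smul_mem _ _ ht.1, fun i => ?_⟩
    rw [lowering_ι_mul]
    exact sub_mem (smul_mem_fockIdeal _ (Submodule.smul_mem _ _ (ht.2 j)))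
      (smul_mem_fockIdeal _ ht.1)
  suffices t ∈ Q from (Submodule.mem_iInf _).1 this.2 i
  induction ht using Submodule.span_induction with
  | mem t ht =>
    obtain ⟨c, s, rfl⟩ := ht
    refine ⟨defect_fockMatrix_zero_apply_mem c s, (Submodule.mem_iInf _).2 fun i => ?_⟩
    have h : lowering q F β i (defect (Eqm k q) F (fockMatrix q F β) 0 c s) =
        q • (FreeAlgebra.ι k i * defect (Eqm k q) F (fockMatrix q F β) 1 c s) :=
      LinearMap.congr_fun (mul_defect_Eqm hq hF (fockMatrix_transpose_mul_mul hq) i c) s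
    rw [Submodule.mem_comap, h]
    have hmem := defect_fockMatrix_apply_mem hq hF htr hβ 1 c s
    exact smul_mem_fockIdeal _ (Submodule.smul_mem _ _ hmem)
  | zero => exact Q.zero_mem
  | add s t _ _ hs ht => exact Q.add_mem hs ht
  | smul a t _ ht => exact mul_mem_of_forall_ι_mul_mem hQ a ht

theorem exists_seq_dotProduct_mulVec_eq_zero {ι : Type*} [Fintype ι] {G : Matrix ι ι k}
    {β : ι → k} {c : k} (hβ : β ⬝ᵥ G *ᵥ β = 0) (hGβ : G *ᵥ β ≠ 0) (hc : c ≠ 0) :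
    ∃ v : ℕ → ι → k, (∀ m, v m ⬝ᵥ G *ᵥ β = c) ∧ ∀ m, v m ⬝ᵥ G *ᵥ v (m + 1) = 0 := by
  have hstart : ∃ v, v ⬝ᵥ G *ᵥ β = c := by
    obtain ⟨u, hu⟩ : ∃ u, u ⬝ᵥ G *ᵥ β ≠ 0 := by
      by_contra! h
      exact hGβ (dotProduct_eq_zero _ fun u => dotProduct_comm u _ ▸ h u)
    exact ⟨(c / (u ⬝ᵥ G *ᵥ β)) • u, by rw [smul_dotProduct, smul_eq_mul, div_mul_cancel₀ _ hu]⟩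
  have hnext (v : {v // v ⬝ᵥ G *ᵥ β = c}) :
      ∃ w : {v // v ⬝ᵥ G *ᵥ β = c}, v.1 ⬝ᵥ G *ᵥ w.1 = 0 := by
    obtain ⟨v, hv⟩ := v
    refine ⟨⟨v - (c⁻¹ * (v ⬝ᵥ G *ᵥ v)) • β, ?_⟩, ?_⟩
    · rw [sub_dotProduct, smul_dotProduct, hβ, hv, smul_zero, sub_zero]
    · rw [Matrix.mulVec_sub, Matrix.mulVec_smul, dotProduct_sub, dotProduct_smul, hv, smul_eq_mul,
        mul_right_comm, inv_mul_cancel₀ hc, one_mul, sub_self]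
  obtain ⟨v₀, hv₀⟩ := hstart
  choose next hnext using hnext
  refine ⟨fun m => (next^[m] ⟨v₀, hv₀⟩).1, fun m => (next^[m] ⟨v₀, hv₀⟩).2, fun m => ?_⟩
  simpa only [Function.iterate_succ_apply'] using hnext _

/-- The representation of the free algebra on sequences in which `x_i` acts as the backward shift
weighted by the `i`-th coordinates of `v`. -/
def weightedShift (v : ℕ → Fin n → k) : FreeAlgebra k (Fin n) →ₐ[k] Module.End k (ℕ → k) :=
  FreeAlgebra.lift k fun i => LinearMap.pi fun m => v m i • LinearMap.proj (m + 1)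

theorem weightedShift_ι_apply (v : ℕ → Fin n → k) (i : Fin n) (f : ℕ → k) (m : ℕ) :
    weightedShift v (FreeAlgebra.ι k i) f m = v m i * f (m + 1) := by
  simp [weightedShift]

theorem weightedShift_defect_zero_one {v : ℕ → Fin n → k}
    (hv : ∀ m, v m ⬝ᵥ F⁻¹ *ᵥ v (m + 1) = 0) (t : FreeAlgebra k (Fin n)) :
    weightedShift v (defect (Eqm k q) F (fockMatrix q F β) 0 1 t) = 0 := by
  ext1 f
  funext m
  calc
    weightedShift v (defect (Eqm k q) F (fockMatrix q F β) 0 1 t) f m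
        = (∑ r, ∑ s, F⁻¹ r s * (v m r * v (m + 1) s)) * weightedShift v t f (m + 2) := by
      rw [defect_Eqm_apply_one]
      simp [LinearMap.sum_apply, Finset.sum_apply, weightedShift_ι_apply, Finset.sum_mul, mul_assoc]
    _ = 0 := by rw [← dotProduct_mulVec_eq_sum, hv, zero_mul]

theorem weightedShift_defect_zero_zero_one (hq : q ≠ 0) {v : ℕ → Fin n → k}
    (hv : ∀ m, v m ⬝ᵥ F⁻¹ *ᵥ β = -q) :
    weightedShift v (defect (Eqm k q) F (fockMatrix q F β) 0 0 1) 1 = 0 := by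
  funext m
  calc
    weightedShift v (defect (Eqm k q) F (fockMatrix q F β) 0 0 1) 1 m
        = -q⁻¹ * (∑ r, ∑ s, F⁻¹ r s * (v m r * β s)) - 1 := by
      rw [defect_Eqm_apply_zero]
      simp [LinearMap.sum_apply, Finset.sum_apply, weightedShift_ι_apply, lowering_one, mul_comm]
    _ = 0 := by rw [← dotProduct_mulVec_eq_sum, hv, neg_mul_neg, inv_mul_cancel₀ hq, sub_self]

theorem weightedShift_eq_zero_of_mem_fockIdeal (hq : q ≠ 0) (hF : IsUnit F.det)
    {v : ℕ → Fin n → k} (hvβ : ∀ m, v m ⬝ᵥ F⁻¹ *ᵥ β = -q)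
    (hv : ∀ m, v m ⬝ᵥ F⁻¹ *ᵥ v (m + 1) = 0) {t : FreeAlgebra k (Fin n)}
    (ht : t ∈ fockIdeal q F β) : weightedShift v t 1 = 0 := by
  induction ht using Submodule.span_induction with
  | mem t ht =>
    obtain ⟨c, s, rfl⟩ := ht
    fin_cases c
    · let Q : Submodule k (FreeAlgebra k (Fin n)) := LinearMap.ker <|
        LinearMap.applyₗ 1 ∘ₗ (weightedShift v).toLinearMap ∘ₗ
          defect (Eqm k q) F (fockMatrix q F β) 0 0
      have h1 : 1 ∈ Q := weightedShift_defect_zero_zero_one hq hvβ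
      have hQ (j : Fin n) (t : FreeAlgebra k (Fin n)) : FreeAlgebra.ι k j * t ∈ Q := by
        have h : defect (Eqm k q) F (fockMatrix q F β) 0 0 (FreeAlgebra.ι k j * t) =
            -defect (Eqm k q) F (fockMatrix q F β) 0 1 (lowering q F β j t) :=
          LinearMap.congr_fun (defect_Eqm_mul hF (fockMatrix_transpose_mul_mul hq) 0 j) t
        simp [Q, h, weightedShift_defect_zero_one hv]
      simpa [Q] using mul_mem_of_forall_ι_mul_mem (fun j t _ => hQ j t) s h1
    · simp [weightedShift_defect_zero_one hv]
  | zero => simp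
  | add s t _ _ hs ht => simp [hs, ht]
  | smul a t _ ht => simp [ht]

theorem one_notMem_fockIdeal (hq : q ≠ 0) (hF : IsUnit F.det) (hβ : β ⬝ᵥ F⁻¹ *ᵥ β = 0)
    (hβ₀ : β ≠ 0) : 1 ∉ fockIdeal q F β := by
  have hinj : Function.Injective F⁻¹.mulVec := Matrix.mulVec_injective_iff_isUnit.2
    ((Matrix.isUnit_nonsing_inv_iff).2 ((Matrix.isUnit_iff_isUnit_det F).2 hF))
  obtain ⟨v, hvβ, hv⟩ := exists_seq_dotProduct_mulVec_eq_zero hβ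
    (fun h => hβ₀ (hinj (h.trans (Matrix.mulVec_zero _).symm))) (neg_ne_zero.2 hq)
  intro h
  have h1 := weightedShift_eq_zero_of_mem_fockIdeal hq hF hvβ hv h
  simp at h1

theorem nontrivial_BB_Eqm_of_isotropic (hq : q ≠ 0) (hF : IsUnit F.det)
    (htr : q ^ 2 + (F * F⁻¹ᵀ).trace * q + 1 = 0) (hβ : β ⬝ᵥ F⁻¹ *ᵥ β = 0) (hβ₀ : β ≠ 0) :
    Nontrivial (BB k (Eqm k q) F) := by
  let N : Submodule k (FreeAlgebra k (Fin n)) := (fockIdeal q F β).restrictScalars k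
  have hN (i : Fin 2) (j : Fin n) : N ≤ N.comap (fockMatrix q F β i j) := by
    intro t ht
    fin_cases i
    · exact (fockIdeal q F β).smul_mem _ ht
    · exact lowering_mem_fockIdeal hq hF htr hβ ht j
  have hpoint : IsBBPoint (Eqm k q) F
      (Matrix.of fun i j => N.mapQ N (fockMatrix q F β i j) (hN i j)) :=
    isBBPoint_of_surjective_intertwining hF N.mkQ_surjective
      (fun i j t => N.mapQ_apply N _ (h := hN i j) t) (fockMatrix_transpose_mul_mul hq) fun i j t =>
        (Submodule.Quotient.mk_eq_zero N).2 (defect_fockMatrix_apply_mem hq hF htr hβ i j t)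
  have : Nontrivial (FreeAlgebra k (Fin n) ⧸ N) := Submodule.Quotient.nontrivial_iff.2 fun h =>
    one_notMem_fockIdeal hq hF hβ hβ₀ (h ▸ Submodule.mem_top : (1 : FreeAlgebra k (Fin n)) ∈ N)
  exact hpoint.nontrivial_BB

end Fock

section AlgebraicClosure

theorem exists_ne_zero_apply_self_eq_zero {K V : Type*} [Field K] [IsAlgClosed K] [AddCommGroup V]
    [Module K V] (hV : 1 < Module.finrank K V) (B : LinearMap.BilinForm K V) :
    ∃ v ≠ 0, B v v = 0 := by
  have : Nontrivial V := Module.nontrivial_of_finrank_pos (zero_lt_one.trans hV)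
  obtain ⟨w, hw⟩ := exists_ne (0 : V)
  obtain ⟨u, hu⟩ := exists_linearIndependent_pair_of_one_lt_finrank hV hw
  by_cases hww : B w w = 0
  · exact ⟨w, hw, hww⟩
  let P : Polynomial K := .C (B w w) * .X ^ 2 + .C (B u w + B w u) * .X + .C (B u u)
  obtain ⟨r, hr⟩ := IsAlgClosed.exists_root P 
    (by rw [Polynomial.degree_quadratic hww]; exact two_ne_zero)
  refine ⟨u + r • w, fun h => ?_, ?_⟩
  · simpa using (LinearIndependent.pair_iff.1 hu r 1 (by rw [one_smul, add_comm, h])).2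
  · simp only [P, Polynomial.IsRoot, Polynomial.eval_add, Polynomial.eval_mul, Polynomial.eval_C,
      Polynomial.eval_pow, Polynomial.eval_X] at hr
    simp only [map_add, map_smul, LinearMap.add_apply, LinearMap.smul_apply, smul_eq_mul]
    linear_combination hr

theorem nontrivial_BB_of_map {K : Type} [Field K] [Algebra k K] {m n : ℕ}
    {E : Matrix (Fin m) (Fin m) k} {F : Matrix (Fin n) (Fin n) k} (hF : IsUnit F.det)
    [Nontrivial (BB K (E.map (algebraMap k K)) (F.map (algebraMap k K)))] :
    Nontrivial (BB k E F) :=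
  (IsBBPoint.restrictScalars (K := K) hF isBBPoint_ZMat).nontrivial_BB

variable {n : ℕ} {q : k} {F : Matrix (Fin n) (Fin n) k}

theorem nontrivial_BB_Eqm_of_isAlgClosed [IsAlgClosed k] (hn : 2 ≤ n) (hq : q ≠ 0)
    (hF : IsUnit F.det) (htr : q ^ 2 + (F * F⁻¹ᵀ).trace * q + 1 = 0) :
    Nontrivial (BB k (Eqm k q) F) := by
  obtain ⟨β, hβ₀, hβ⟩ := exists_ne_zero_apply_self_eq_zero
    (by rwa [Module.finrank_fin_fun]) (Matrix.toBilin' F⁻¹)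
  exact nontrivial_BB_Eqm_of_isotropic hq hF htr (by rwa [Matrix.toBilin'_apply'] at hβ) hβ₀

theorem Eqm_map {K : Type} [Field K] (f : k →+* K) : (Eqm k q).map f = Eqm K (f q) := by
  ext i j
  fin_cases i <;> fin_cases j <;> simp [Eqm]

theorem nontrivial_BB_Eqm (hn : 2 ≤ n) (hq : q ≠ 0) (hF : IsUnit F.det)
    (htr : q ^ 2 + (F * F⁻¹ᵀ).trace * q + 1 = 0) : Nontrivial (BB k (Eqm k q) F) := by
  let f : k →+* AlgebraicClosure k := algebraMap k (AlgebraicClosure k)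
  have hF' : IsUnit (F.map f).det := by
    simpa only [RingHom.map_det, RingHom.mapMatrix_apply] using hF.map f
  have htrace : (F.map f * (F.map f)⁻¹ᵀ).trace = f (F * F⁻¹ᵀ).trace := by
    rw [map_nonsing_inv_of_isUnit_det f hF, ← Matrix.transpose_map, ← Matrix.map_mul,
      AddMonoidHom.map_trace]
  have htr' : f q ^ 2 + (F.map f * (F.map f)⁻¹ᵀ).trace * f q + 1 = 0 := by
    simpa only [htrace, map_add, map_mul, map_pow, map_one, map_zero] using congrArg f htr
  have := nontrivial_BB_Eqm_of_isAlgClosed hn ((map_ne_zero f).2 hq) hF' htr'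
  rw [← Eqm_map] at this
  exact nontrivial_BB_of_map (K := AlgebraicClosure k) hF

end AlgebraicClosure

end

/-- **Statement 12.** If `q ∈ k*` satisfies `q² + tr(F·ᵀF⁻¹)·q + 1 = 0` then the
`2n` generators `z i j` of `B(E_q, F)` are linearly independent over `k`. -/
theorem BB_Eq_generators_linearIndependent {n : ℕ} (hn : 2 ≤ n) (q : k) (hq : q ≠ 0)
    (F : Matrix (Fin n) (Fin n) k) (hF : IsUnit F.det)
    (htr : q ^ 2 + (F * F⁻¹ᵀ).trace * q + 1 = 0) :
    LinearIndependent k (fun p : Fin 2 × Fin n => ZMat k (Eqm k q) F p.1 p.2) := by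
  have : Nontrivial (BB k (Eqm k q) F) := nontrivial_BB_Eqm hn hq hF htr
  exact linearIndependent_ZMat_of_isBBPoint (isUnit_det_Eqm hq) (isBBPoint_slqPoint hq)
    linearIndependent_slqPoint
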